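/- Let (X, 𝒜) be a measurable space, μ a probability measure on X, η : X → [0,1] measurable, c ∈ (0,1) and α, β > 0. Then the infimum over all measurable r : X → ℝ of the surrogate risk R₁(r) = ∫ C₁(r(x), η(x)) dμ(x) equals ∫ (1/(1 − γ))·(2βc/α)^γ·I_{η(x)}^{1−γ} dμ(x), where γ = α/(α + 2β); in particular this infimum is attained by the measurable rejector r₀(x) = (2/(2β + α))·ln(2βc/(α·I_{η(x)})), so the (ℓ₁, all-measurable-functions)-minimizability gap vanishes. -/

import Mathlib

open MeasureTheory

/-- The surrogate rejection loss `ℓ₁(t, a) = exp(α(t − a)/2) + c·exp(−β t)`. -/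
noncomputable def surrogateRejectionLoss (c α β t a : ℝ) : ℝ :=
  Real.exp (α * (t - a) / 2) + c * Real.exp (-β * t)

/-- The conditional risk of the surrogate rejection loss:
`C₁(t, η) = η·ℓ₁(t, +1) + (1 − η)·ℓ₁(t, −1)`. -/
noncomputable def condRiskSurrogate (c α β t η : ℝ) : ℝ :=
  η * surrogateRejectionLoss c α β t 1 + (1 - η) * surrogateRejectionLoss c α β t (-1)

/-- `I_η = η·exp(−α/2) + (1 − η)·exp(α/2)`. -/
noncomputable def Ieta (α η : ℝ) : ℝ :=
  η * Real.exp (-α / 2) + (1 - η) * Real.exp (α / 2)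

/-!
Since `C₁(t, η) = I_η exp(αt/2) + c exp(-βt)`, the risk can be minimized pointwise in `x`. The
tangent-line bound `exp(as)(1 + a(t - s)) ≤ exp(at)`, applied to both exponentials at a point `s`
where the two derivatives cancel, shows that `s` is a global minimizer; solving for `s` gives
`r₀`. There the second summand is `α / (2β)` times the first, whence the factor
`1 / (1 - γ) = 1 + α / (2β)`. As `r₀` is a measurable function of `η`, integrating the pointwise
minimum gives the infimum.
-/

/-- The pointwise optimal rejector `r₀`, as a function of the class probability `η`. -/
noncomputable def optimalRejector (c α β η : ℝ) : ℝ :=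
  (2 / (2 * β + α)) * Real.log (2 * β * c / (α * Ieta α η))

/-- The minimal conditional risk `inf_t C₁(t, η)` in closed form; `α / (α + 2 * β)` is the `γ` of
the paper. -/
noncomputable def optimalCondRisk (c α β η : ℝ) : ℝ :=
  (1 / (1 - α / (α + 2 * β))) * (2 * β * c / α) ^ (α / (α + 2 * β)) *
    Ieta α η ^ (1 - α / (α + 2 * β))

section ExpSum

open Real

variable {a b J k : ℝ}

lemma exp_mul_one_add_mul_sub_le_exp (a s t : ℝ) :
    exp (a * s) * (1 + a * (t - s)) ≤ exp (a * t) :=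
  calc exp (a * s) * (1 + a * (t - s))
      ≤ exp (a * s) * exp (a * (t - s)) := by
        gcongr
        rw [add_comm]
        exact add_one_le_exp _
    _ = exp (a * t) := by rw [← exp_add, mul_sub, add_sub_cancel]

lemma isMinOn_mul_exp_add_mul_exp_neg {s : ℝ} (hJ : 0 ≤ J) (hk : 0 ≤ k)
    (hs : a * (J * exp (a * s)) = b * (k * exp (-b * s))) :
    IsMinOn (fun t ↦ J * exp (a * t) + k * exp (-b * t)) Set.univ s := by
  refine isMinOn_univ_iff.2 fun t ↦ ?_
  calc J * exp (a * s) + k * exp (-b * s)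
      = J * (exp (a * s) * (1 + a * (t - s))) + k * (exp (-b * s) * (1 + -b * (t - s))) := by
        linear_combination -(t - s) * hs
    _ ≤ J * exp (a * t) + k * exp (-b * t) := by
        gcongr <;> exact exp_mul_one_add_mul_sub_le_exp _ _ _

lemma exp_mul_log_div_add {q : ℝ} (hq : 0 < q) (hab : a + b ≠ 0) :
    exp (a * (log q / (a + b))) = q * exp (-b * (log q / (a + b))) := by
  have hexponent : a * (log q / (a + b)) = log q + -b * (log q / (a + b)) := by
    field_simp
    ring
  rw [hexponent, exp_add, exp_log hq]

lemma mul_mul_exp_mul_log_div_add (ha : 0 < a) (hb : 0 < b) (hJ : 0 < J) (hk : 0 < k) :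
    a * (J * exp (a * (log (b * k / (a * J)) / (a + b)))) =
      b * (k * exp (-b * (log (b * k / (a * J)) / (a + b)))) := by
  rw [exp_mul_log_div_add (by positivity) (by positivity)]
  field_simp

lemma mul_exp_mul_log_div_add (ha : 0 < a) (hb : 0 < b) (hJ : 0 < J) (hk : 0 < k) :
    J * exp (a * (log (b * k / (a * J)) / (a + b))) =
      (b * k / a) ^ (a / (a + b)) * J ^ (1 - a / (a + b)) :=
  calc J * exp (a * (log (b * k / (a * J)) / (a + b)))
      = J * (b * k / a / J) ^ (a / (a + b)) := by
        rw [div_div, rpow_def_of_pos (by positivity), mul_div_left_comm]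
    _ = (b * k / a) ^ (a / (a + b)) * J ^ (1 - a / (a + b)) := by
        rw [div_rpow (by positivity) hJ.le, rpow_sub hJ, rpow_one, mul_div_left_comm]

lemma mul_exp_add_mul_exp_neg_log_div_add (ha : 0 < a) (hb : 0 < b) (hJ : 0 < J) (hk : 0 < k) :
    J * exp (a * (log (b * k / (a * J)) / (a + b))) +
        k * exp (-b * (log (b * k / (a * J)) / (a + b))) =
      1 / (1 - a / (a + b)) * (b * k / a) ^ (a / (a + b)) * J ^ (1 - a / (a + b)) := by
  have hbalance := mul_mul_exp_mul_log_div_add ha hb hJ hk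
  have hconst : 1 / (1 - a / (a + b)) = 1 + a / b := by
    rw [one_sub_div (by positivity), add_sub_cancel_left]
    field_simp
    ring
  rw [mul_assoc, ← mul_exp_mul_log_div_add ha hb hJ hk, hconst, one_add_mul, div_mul_eq_mul_div,
    hbalance, mul_div_cancel_left₀ _ hb.ne']

end ExpSum

section CondRisk

variable {c α β η : ℝ}

lemma Ieta_pos (α : ℝ) (hη : η ∈ Set.Icc (0 : ℝ) 1) : 0 < Ieta α η :=
  convex_Ioi (0 : ℝ) (Real.exp_pos _) (Real.exp_pos _) hη.1 (sub_nonneg.2 hη.2)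
    (add_sub_cancel η 1)

lemma condRiskSurrogate_eq_Ieta_mul_exp_add (c α β t η : ℝ) :
    condRiskSurrogate c α β t η =
      Ieta α η * Real.exp (α / 2 * t) + c * Real.exp (-β * t) := by
  have hsplit (a : ℝ) : Real.exp (α * (t - a) / 2) =
      Real.exp (α / 2 * t) * Real.exp (-a * α / 2) := by
    rw [← Real.exp_add]
    ring_nf
  simp only [condRiskSurrogate, surrogateRejectionLoss, Ieta, hsplit, neg_neg, neg_mul, one_mul]
  ring

lemma optimalRejector_eq_log_div_half_add (c α β η : ℝ) :
    optimalRejector c α β η =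
      Real.log (β * c / (α / 2 * Ieta α η)) / (α / 2 + β) := by
  have hscale : 2 / (2 * β + α) = 1 / (α / 2 + β) := by
    rw [← mul_div_mul_left 1 _ two_ne_zero]
    ring_nf
  have hratio : 2 * β * c / (α * Ieta α η) = β * c / (α / 2 * Ieta α η) := by
    rw [← mul_div_mul_left (β * c) _ two_ne_zero]
    ring_nf
  rw [optimalRejector, hscale, hratio, one_div_mul_eq_div]

lemma optimalCondRisk_eq_half (c α β η : ℝ) :
    optimalCondRisk c α β η =
      1 / (1 - α / 2 / (α / 2 + β)) * (β * c / (α / 2)) ^ (α / 2 / (α / 2 + β)) *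
        Ieta α η ^ (1 - α / 2 / (α / 2 + β)) := by
  have hγ : α / (α + 2 * β) = α / 2 / (α / 2 + β) := by
    rw [← mul_div_mul_left (α / 2) _ two_ne_zero]
    ring_nf
  have hbase : 2 * β * c / α = β * c / (α / 2) := by ring
  rw [optimalCondRisk, hγ, hbase]

lemma isMinOn_condRiskSurrogate_optimalRejector (hc : 0 < c) (hα : 0 < α) (hβ : 0 < β)
    (hI : 0 < Ieta α η) :
    IsMinOn (condRiskSurrogate c α β · η) Set.univ (optimalRejector c α β η) := by
  simp only [condRiskSurrogate_eq_Ieta_mul_exp_add, optimalRejector_eq_log_div_half_add]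
  exact isMinOn_mul_exp_add_mul_exp_neg hI.le hc.le
    (mul_mul_exp_mul_log_div_add (half_pos hα) hβ hI hc)

lemma condRiskSurrogate_optimalRejector (hc : 0 < c) (hα : 0 < α) (hβ : 0 < β)
    (hI : 0 < Ieta α η) :
    condRiskSurrogate c α β (optimalRejector c α β η) η = optimalCondRisk c α β η := by
  rw [condRiskSurrogate_eq_Ieta_mul_exp_add, optimalRejector_eq_log_div_half_add,
    optimalCondRisk_eq_half]
  exact mul_exp_add_mul_exp_neg_log_div_add (half_pos hα) hβ hI hc

lemma measurable_optimalRejector (c α β : ℝ) : Measurable (optimalRejector c α β) := by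
  unfold optimalRejector Ieta
  fun_prop

end CondRisk

lemma isLeast_lintegral_of_ae_isMinOn {X T : Type*} [MeasurableSpace X] [MeasurableSpace T]
    {μ : Measure X} {f : X → T → ENNReal} {r₀ : X → T} (hr₀ : Measurable r₀)
    (hmin : ∀ᵐ x ∂μ, IsMinOn (f x) Set.univ (r₀ x)) :
    IsLeast {y | ∃ r : X → T, Measurable r ∧ y = ∫⁻ x, f x (r x) ∂μ} (∫⁻ x, f x (r₀ x) ∂μ) := by
  refine ⟨⟨r₀, hr₀, rfl⟩, ?_⟩
  rintro _ ⟨r, -, rfl⟩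
  exact lintegral_mono_ae (hmin.mono fun x hx ↦ hx (Set.mem_univ (r x)))

theorem surrogate_risk_inf_attained_general {X : Type*} [MeasurableSpace X] (μ : Measure X)
    {η : X → ℝ} (hη : Measurable η) {c α β : ℝ} (hI : ∀ᵐ x ∂μ, 0 < Ieta α (η x))
    (hc : 0 < c) (hα : 0 < α) (hβ : 0 < β) :
    IsLeast {y : ENNReal | ∃ r : X → ℝ, Measurable r ∧
        y = ∫⁻ x, ENNReal.ofReal (condRiskSurrogate c α β (r x) (η x)) ∂μ}
      (∫⁻ x, ENNReal.ofReal (optimalCondRisk c α β (η x)) ∂μ) ∧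
    ∫⁻ x, ENNReal.ofReal (condRiskSurrogate c α β (optimalRejector c α β (η x)) (η x)) ∂μ =
      ∫⁻ x, ENNReal.ofReal (optimalCondRisk c α β (η x)) ∂μ := by
  have hvalue : ∫⁻ x, ENNReal.ofReal
        (condRiskSurrogate c α β (optimalRejector c α β (η x)) (η x)) ∂μ =
      ∫⁻ x, ENNReal.ofReal (optimalCondRisk c α β (η x)) ∂μ :=
    lintegral_congr_ae <| hI.mono fun x hx ↦
      congrArg ENNReal.ofReal (condRiskSurrogate_optimalRejector hc hα hβ hx)
  have hmin : ∀ᵐ x ∂μ, IsMinOn (fun t ↦ ENNReal.ofReal (condRiskSurrogate c α β t (η x)))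
      Set.univ (optimalRejector c α β (η x)) :=
    hI.mono fun x hx ↦
      (isMinOn_condRiskSurrogate_optimalRejector hc hα hβ hx).comp_mono ENNReal.ofReal_mono
  refine ⟨?_, hvalue⟩
  rw [← hvalue]
  exact isLeast_lintegral_of_ae_isMinOn ((measurable_optimalRejector c α β).comp hη) hmin

/-- the infimum of the surrogate risk `R₁(r) = ∫ C₁(r(x), η(x)) dμ(x)`
over all measurable rejectors `r : X → ℝ` equals
`∫ (1/(1 − γ))·(2βc/α)^γ·I_{η(x)}^{1−γ} dμ(x)` with `γ = α/(α + 2β)`, and is attained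
by the measurable rejector `r₀(x) = (2/(2β + α))·ln(2βc/(α·I_{η(x)}))`: the
minimizability gap vanishes. (Risks are expressed as lower integrals of the
nonnegative losses, so that non-integrable rejectors have infinite risk.) -/
theorem surrogate_risk_inf_attained {X : Type*} [MeasurableSpace X]
    (μ : Measure X) [IsProbabilityMeasure μ]
    (η : X → ℝ) (hη : Measurable η) (hη01 : ∀ x, η x ∈ Set.Icc (0 : ℝ) 1)
    (c α β : ℝ) (hc : 0 < c) (hc1 : c < 1) (hα : 0 < α) (hβ : 0 < β) :
    IsLeast {y : ENNReal | ∃ r : X → ℝ, Measurable r ∧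
        y = ∫⁻ x, ENNReal.ofReal (condRiskSurrogate c α β (r x) (η x)) ∂μ}
      (∫⁻ x, ENNReal.ofReal ((1 / (1 - α / (α + 2 * β))) *
        (2 * β * c / α) ^ (α / (α + 2 * β)) *
        Ieta α (η x) ^ (1 - α / (α + 2 * β))) ∂μ) ∧
    (∫⁻ x, ENNReal.ofReal (condRiskSurrogate c α β
        ((2 / (2 * β + α)) * Real.log (2 * β * c / (α * Ieta α (η x)))) (η x)) ∂μ)
      = ∫⁻ x, ENNReal.ofReal ((1 / (1 - α / (α + 2 * β))) *
          (2 * β * c / α) ^ (α / (α + 2 * β)) *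
          Ieta α (η x) ^ (1 - α / (α + 2 * β))) ∂μ :=
  surrogate_risk_inf_attained_general μ hη (ae_of_all μ fun x ↦ Ieta_pos α (hη01 x)) hc hα hβ
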